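/- Let ω ≥ 0 and let u : ℝ × ℝ → ℝ be a smooth solution of the regularized Camassa–Holm equation that is 2π-periodic in its spatial variable x. Then the quantity F(t) = (1/2) ∫₀^{2π} (u(x,t)³ + u(x,t) u_x(x,t)² + ω u(x,t)²) dx is conserved: the function t ↦ F(t) has derivative zero at every t ∈ ℝ. -/

import Mathlib

/-!
The proof exhibits a local conservation law `E_t = Φ_x` for the density `E = u³ + u u_x² + ω u²`.

Put `v = u_t` and `G = (3 u² - u_x² - 2 u u_xx + 2 ω u) / 2`, half the variational derivative of
`∫ E`. The equation reads `v - v_xx = -G_x`, so `Q = G - v_x` satisfies `Q_x = -v`. Since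
`E_t = 2 G v + (2 u u_x v)_x` and `2 G v = 2 (Q + v_x) v = (v² - Q²)_x`, the flux is
`Φ = v² - Q² + 2 u u_x v`. It is built from derivatives of `u`, hence `2π`-periodic, so `E_t`
integrates to zero over a period. Differentiation under the integral sign
(`hasDerivAt_integral_of_smooth`) and the symmetry of mixed partial derivatives (`pdt_pdx`) make
this rigorous.
-/

open Real

/-- Partial derivative with respect to the first (spatial) variable. -/
noncomputable def pdx (u : ℝ → ℝ → ℝ) : ℝ → ℝ → ℝ := fun x t => deriv (fun y => u y t) x

/-- Partial derivative with respect to the second (time) variable. -/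
noncomputable def pdt (u : ℝ → ℝ → ℝ) : ℝ → ℝ → ℝ := fun x t => deriv (fun s => u x s) t


section Calculus

open scoped ContDiff

/-- Joint smoothness of a function of two real variables given in curried form. -/
def JointlySmooth (u : ℝ → ℝ → ℝ) : Prop := ContDiff ℝ ∞ (fun p : ℝ × ℝ => u p.1 p.2)

namespace JointlySmooth

variable {u : ℝ → ℝ → ℝ}

lemma differentiable (h : JointlySmooth u) : Differentiable ℝ (fun p : ℝ × ℝ => u p.1 p.2) :=
  ContDiff.differentiable h (by simp)

lemma hasDerivAt_fst (h : JointlySmooth u) (x t : ℝ) :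
    HasDerivAt (fun y => u y t) (fderiv ℝ (fun p : ℝ × ℝ => u p.1 p.2) (x, t) (1, 0)) x :=
  HasFDerivAt.comp_hasDerivAt (f := fun y : ℝ => (y, t)) x (h.differentiable (x, t)).hasFDerivAt
    ((hasDerivAt_id x).prodMk (hasDerivAt_const x t))

lemma hasDerivAt_snd (h : JointlySmooth u) (x t : ℝ) :
    HasDerivAt (fun s => u x s) (fderiv ℝ (fun p : ℝ × ℝ => u p.1 p.2) (x, t) (0, 1)) t :=
  HasFDerivAt.comp_hasDerivAt (f := fun s : ℝ => (x, s)) t (h.differentiable (x, t)).hasFDerivAt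
    ((hasDerivAt_const t x).prodMk (hasDerivAt_id t))

lemma hasDerivAt_pdx (h : JointlySmooth u) (x t : ℝ) :
    HasDerivAt (fun y => u y t) (pdx u x t) x :=
  (h.hasDerivAt_fst x t).differentiableAt.hasDerivAt

lemma hasDerivAt_pdt (h : JointlySmooth u) (x t : ℝ) :
    HasDerivAt (fun s => u x s) (pdt u x t) t :=
  (h.hasDerivAt_snd x t).differentiableAt.hasDerivAt

lemma pdx_eq (h : JointlySmooth u) (x t : ℝ) :
    pdx u x t = fderiv ℝ (fun p : ℝ × ℝ => u p.1 p.2) (x, t) (1, 0) :=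
  (h.hasDerivAt_fst x t).deriv

lemma pdt_eq (h : JointlySmooth u) (x t : ℝ) :
    pdt u x t = fderiv ℝ (fun p : ℝ × ℝ => u p.1 p.2) (x, t) (0, 1) :=
  (h.hasDerivAt_snd x t).deriv

lemma fderiv_smooth (h : JointlySmooth u) :
    ContDiff ℝ ∞ (fderiv ℝ (fun p : ℝ × ℝ => u p.1 p.2)) :=
  ContDiff.fderiv_right (n := ∞) h (by simp)

lemma pdx (h : JointlySmooth u) : JointlySmooth (pdx u) := by
  unfold JointlySmooth
  simp only [h.pdx_eq]
  exact h.fderiv_smooth.clm_apply contDiff_const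

lemma pdt (h : JointlySmooth u) : JointlySmooth (pdt u) := by
  unfold JointlySmooth
  simp only [h.pdt_eq]
  exact h.fderiv_smooth.clm_apply contDiff_const

/-- Symmetry of mixed partial derivatives. -/
lemma pdt_pdx (h : JointlySmooth u) : _root_.pdt (_root_.pdx u) = _root_.pdx (_root_.pdt u) := by
  funext x t
  have hd : DifferentiableAt ℝ (fderiv ℝ (fun p : ℝ × ℝ => u p.1 p.2)) (x, t) :=
    h.fderiv_smooth.differentiable (by simp) (x, t)
  have hsymm : IsSymmSndFDerivAt ℝ (fun p : ℝ × ℝ => u p.1 p.2) (x, t) :=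
    ContDiffAt.isSymmSndFDerivAt (n := ∞) (ContDiff.contDiffAt h) (by
      simp only [minSmoothness_of_isRCLikeNormedField]
      exact WithTop.coe_le_coe.2 (le_top : (2 : ℕ∞) ≤ ⊤))
  rw [h.pdx.pdt_eq, h.pdt.pdx_eq]
  simp only [h.pdx_eq, h.pdt_eq, Prod.mk.eta]
  rw [fderiv_clm_apply hd (differentiableAt_const _),
    fderiv_clm_apply hd (differentiableAt_const _)]
  simpa using hsymm (0, 1) (1, 0)

end JointlySmooth

lemma pdx_periodic {u : ℝ → ℝ → ℝ} {c : ℝ} (h : ∀ x t, u (x + c) t = u x t) (x t : ℝ) :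
    pdx u (x + c) t = pdx u x t := by
  unfold pdx
  rw [← deriv_comp_add_const (f := fun y => u y t)]
  simp only [h]

lemma pdt_periodic {u : ℝ → ℝ → ℝ} {c : ℝ} (h : ∀ x t, u (x + c) t = u x t) (x t : ℝ) :
    pdt u (x + c) t = pdt u x t := by
  simp only [pdt, h]

/-- Differentiation under the integral sign: on the compact set `[a, b] × [t - 1, t + 1]` the time
derivative is bounded, so dominated convergence applies with a constant bound. -/
lemma hasDerivAt_integral_of_smooth {E : ℝ → ℝ → ℝ} (h : JointlySmooth E) (a b t : ℝ) :
    HasDerivAt (fun s => ∫ x in a..b, E x s) (∫ x in a..b, pdt E x t) t := by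
  have hcont : ∀ {f : ℝ → ℝ → ℝ}, JointlySmooth f → ∀ s, Continuous fun x => f x s :=
    fun hf s => (ContDiff.continuous hf).comp (Continuous.prodMk_left s)
  obtain ⟨C, hC⟩ := (isCompact_uIcc.prod isCompact_Icc :
    IsCompact (Set.uIcc a b ×ˢ Set.Icc (t - 1) (t + 1))).exists_bound_of_continuousOn
      (ContDiff.continuous h.pdt).continuousOn
  refine (intervalIntegral.hasDerivAt_integral_of_dominated_loc_of_deriv_le
    (F := fun s x => E x s) (F' := fun s x => pdt E x s) (bound := fun _ => C)
    (Icc_mem_nhds (sub_one_lt t) (lt_add_one t))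
    (.of_forall fun s => (hcont h s).aestronglyMeasurable)
    ((hcont h t).intervalIntegrable a b) (hcont h.pdt t).aestronglyMeasurable
    (.of_forall fun x hx s hs => hC (x, s) ⟨Set.uIoc_subset_uIcc hx, hs⟩)
    intervalIntegrable_const
    (.of_forall fun x _ s _ => h.hasDerivAt_pdt x s)).2

end Calculus

/-- For `ω ≥ 0` and a smooth, `2π`-spatially-periodic solution `u` of the
regularized Camassa–Holm equation, the quantity
`F(t) = (1/2) ∫₀^{2π} (u³ + u u_x² + ω u²) dx` is conserved: `t ↦ F(t)` has zero
derivative. -/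
theorem momentum_conserved_rCH (ω : ℝ) (hω : 0 ≤ ω) (u : ℝ → ℝ → ℝ)
    (hsmooth : ContDiff ℝ (⊤ : ℕ∞) (fun p : ℝ × ℝ => u p.1 p.2))
    (hper : ∀ x t, u (x + 2 * π) t = u x t)
    (hPDE : ∀ x t,
      pdt u x t + ω * pdx u x t - pdt (pdx (pdx u)) x t + 3 * u x t * pdx u x t
        = 2 * pdx u x t * pdx (pdx u) x t + u x t * pdx (pdx (pdx u)) x t) :
    ∀ t : ℝ,
      deriv (fun s => (1/2) *
          ∫ x in (0:ℝ)..(2 * π), ((u x s) ^ 3 + u x s * (pdx u x s) ^ 2 + ω * (u x s) ^ 2)) t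
        = 0 := by
  intro t
  have hu : JointlySmooth u := hsmooth
  have hux := hu.pdx
  have huxx := hux.pdx
  have hv := hu.pdt
  have hvx := hv.pdx
  have hE : JointlySmooth fun x s =>
      (u x s) ^ 3 + u x s * (pdx u x s) ^ 2 + ω * (u x s) ^ 2 := by
    unfold JointlySmooth at hu hux ⊢
    exact ((hu.pow 3).add (hu.mul (hux.pow 2))).add (contDiff_const.mul (hu.pow 2))
  have hEt : ∀ x, pdt (fun x s => (u x s) ^ 3 + u x s * (pdx u x s) ^ 2 + ω * (u x s) ^ 2) x t
      = 3 * u x t ^ 2 * pdt u x t + pdt u x t * pdx u x t ^ 2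
        + 2 * u x t * pdx u x t * pdx (pdt u) x t + 2 * ω * u x t * pdt u x t := by
    intro x
    have h0 := hu.hasDerivAt_pdt x t
    have h1 := hux.hasDerivAt_pdt x t
    rw [hu.pdt_pdx] at h1
    refine (((h0.pow 3).add (h0.mul (h1.pow 2))).add ((h0.pow 2).const_mul ω)).deriv.trans ?_
    simp only [Pi.pow_apply]
    push_cast
    ring
  have hflux : ∀ x, HasDerivAt
      (fun y => pdt u y t ^ 2
        - ((3 * u y t ^ 2 - pdx u y t ^ 2 - 2 * (u y t * pdx (pdx u) y t) + 2 * ω * u y t) / 2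
            - pdx (pdt u) y t) ^ 2
        + 2 * (u y t * pdx u y t * pdt u y t))
      (pdt (fun x s => (u x s) ^ 3 + u x s * (pdx u x s) ^ 2 + ω * (u x s) ^ 2) x t) x := by
    intro x
    have h0 := hu.hasDerivAt_pdx x t
    have h1 := hux.hasDerivAt_pdx x t
    have h2 := huxx.hasDerivAt_pdx x t
    have k0 := hv.hasDerivAt_pdx x t
    have k1 := hvx.hasDerivAt_pdx x t
    have hp := hPDE x t
    rw [hux.pdt_pdx, hu.pdt_pdx] at hp
    have hQ := ((((((h0.pow 2).const_mul 3).sub (h1.pow 2)).sub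
      ((h0.mul h2).const_mul 2)).add (h0.const_mul (2 * ω))).div_const 2).sub k1
    refine (((k0.pow 2).sub (hQ.pow 2)).add (((h0.mul h1).mul k0).const_mul 2)).congr_deriv ?_
    rw [hEt x]
    simp only [Pi.pow_apply, Pi.mul_apply, Pi.sub_apply, Pi.add_apply]
    push_cast
    -- The equation says `Q_x + v = 0`, and `Φ_x - E_t = -2 Q (Q_x + v)` identically.
    linear_combination (-2 * ((3 * u x t ^ 2 - pdx u x t ^ 2 - 2 * (u x t * pdx (pdx u) x t)
      + 2 * ω * u x t) / 2 - pdx (pdt u) x t)) * hp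
  have hint : ∫ x in (0:ℝ)..(2 * π),
      pdt (fun x s => (u x s) ^ 3 + u x s * (pdx u x s) ^ 2 + ω * (u x s) ^ 2) x t = 0 := by
    rw [intervalIntegral.integral_eq_sub_of_hasDerivAt (fun x _ => hflux x)
      (((ContDiff.continuous hE.pdt).comp
        (Continuous.prodMk_left t)).intervalIntegrable _ _)]
    have e0 := hper 0 t
    have e1 := pdx_periodic hper 0 t
    have e2 := pdx_periodic (pdx_periodic hper) 0 t
    have e3 := pdt_periodic hper 0 t
    have e4 := pdx_periodic (pdt_periodic hper) 0 t
    rw [zero_add] at e0 e1 e2 e3 e4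
    rw [e0, e1, e2, e3, e4, sub_self]
  have hF := (hasDerivAt_integral_of_smooth hE 0 (2 * π) t).const_mul (1 / 2)
  rw [hF.deriv, hint, mul_zero]
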